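/- Assume conditions (i)–(iii) hold and f is convolution invertible with inverse f^{-1}. For i ≥ 1 and h_0, h_1, …, h_i ∈ H define U(h_0, …, h_i) = γ(h_0^{(1)}) γ^{-1}(h_i^{(2)}) ⋯ γ^{-1}(h_1^{(2)}) γ^{-1}(h_0^{(2)} S(h_1^{(1)} ⋯ h_i^{(1)})) ∈ E. Then: (a) ν(U(h_0, …, h_i)) = U(h_0, …, h_i) ⊗ 1_H, so U(h_0, …, h_i) lies in A#1; and (b) γ(h_0) γ^{-1}(h_i) ⋯ γ^{-1}(h_1) = U(h_0^{(1)}, h_1^{(2)}, …, h_i^{(2)}) γ(h_0^{(2)} S(h_1^{(1)} ⋯ h_i^{(1)})). -/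

import Mathlib

open TensorProduct

noncomputable section CrossedProduct

variable (k A H : Type*) [CommRing k] [Ring A] [Algebra k A] [Ring H] [HopfAlgebra k H]

/-- A chosen "Sweedler representation" of the comultiplication of `H`:
`comul h = ∑_{i < n h} c₁ h i ⊗ c₂ h i` for every `h`. -/
def IsSweedlerRep (n : H → ℕ) (c₁ c₂ : H → ℕ → H) : Prop :=
  ∀ h : H, Coalgebra.comul (R := k) h = ∑ i ∈ Finset.range (n h), c₁ h i ⊗ₜ[k] c₂ h i

/-- `σ` is a weak action of `H` on `A`: `(ab)^h = a^{h⁽¹⁾} b^{h⁽²⁾}`, `1^h = ε(h)1`, `a^1 = a`. -/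
def IsWeakAction (n : H → ℕ) (c₁ c₂ : H → ℕ → H) (σ : H →ₗ[k] A →ₗ[k] A) : Prop :=
  (∀ (h : H) (a b : A),
      σ h (a * b) = ∑ i ∈ Finset.range (n h), σ (c₁ h i) a * σ (c₂ h i) b) ∧
  (∀ h : H, σ h (1 : A) = Coalgebra.counit (R := k) h • (1 : A)) ∧
  (∀ a : A, σ (1 : H) a = a)

/-- Condition (i): normality of the cocycle `f`. -/
def IsNormal (f : H →ₗ[k] H →ₗ[k] A) : Prop :=
  ∀ h : H, f h (1 : H) = Coalgebra.counit (R := k) h • (1 : A) ∧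
    f (1 : H) h = Coalgebra.counit (R := k) h • (1 : A)

/-- Condition (ii): the cocycle condition
`f(l⁽¹⁾,m⁽¹⁾)^{h⁽¹⁾} f(h⁽²⁾, l⁽²⁾m⁽²⁾) = f(h⁽¹⁾,l⁽¹⁾) f(h⁽²⁾l⁽²⁾, m)`. -/
def IsCocycle (n : H → ℕ) (c₁ c₂ : H → ℕ → H) (σ : H →ₗ[k] A →ₗ[k] A)
    (f : H →ₗ[k] H →ₗ[k] A) : Prop :=
  ∀ h l m : H,
    (∑ i ∈ Finset.range (n h), ∑ j ∈ Finset.range (n l), ∑ p ∈ Finset.range (n m),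
      σ (c₁ h i) (f (c₁ l j) (c₁ m p)) * f (c₂ h i) (c₂ l j * c₂ m p)) =
    ∑ i ∈ Finset.range (n h), ∑ j ∈ Finset.range (n l),
      f (c₁ h i) (c₁ l j) * f (c₂ h i * c₂ l j) m

/-- Condition (iii): the twisted module condition
`(a^{l⁽¹⁾})^{h⁽¹⁾} f(h⁽²⁾,l⁽²⁾) = f(h⁽¹⁾,l⁽¹⁾) a^{h⁽²⁾l⁽²⁾}`. -/
def IsTwistedModule (n : H → ℕ) (c₁ c₂ : H → ℕ → H) (σ : H →ₗ[k] A →ₗ[k] A)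
    (f : H →ₗ[k] H →ₗ[k] A) : Prop :=
  ∀ (h l : H) (a : A),
    (∑ i ∈ Finset.range (n h), ∑ j ∈ Finset.range (n l),
      σ (c₁ h i) (σ (c₁ l j) a) * f (c₂ h i) (c₂ l j)) =
    ∑ i ∈ Finset.range (n h), ∑ j ∈ Finset.range (n l),
      f (c₁ h i) (c₁ l j) * σ (c₂ h i * c₂ l j) a

/-- `finv` is the convolution inverse of `f`:
`f(h⁽¹⁾,l⁽¹⁾) f⁻¹(h⁽²⁾,l⁽²⁾) = f⁻¹(h⁽¹⁾,l⁽¹⁾) f(h⁽²⁾,l⁽²⁾) = ε(h)ε(l)1_A`. -/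
def IsConvInverse (n : H → ℕ) (c₁ c₂ : H → ℕ → H) (f finv : H →ₗ[k] H →ₗ[k] A) : Prop :=
  ∀ h l : H,
    (∑ i ∈ Finset.range (n h), ∑ j ∈ Finset.range (n l),
        f (c₁ h i) (c₁ l j) * finv (c₂ h i) (c₂ l j) =
      (Coalgebra.counit (R := k) h * Coalgebra.counit (R := k) l) • (1 : A)) ∧
    (∑ i ∈ Finset.range (n h), ∑ j ∈ Finset.range (n l),
        finv (c₁ h i) (c₁ l j) * f (c₂ h i) (c₂ l j) =
      (Coalgebra.counit (R := k) h * Coalgebra.counit (R := k) l) • (1 : A))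

/-- The multiplication of `A #_f H` as a bilinear map on `A ⊗[k] H`:
`(a # h)(b # l) = a b^{h⁽¹⁾} f(h⁽²⁾, l⁽¹⁾) # h⁽³⁾ l⁽²⁾`. -/
def crossedMul (σ : H →ₗ[k] A →ₗ[k] A) (f : H →ₗ[k] H →ₗ[k] A) :
    (A ⊗[k] H) →ₗ[k] (A ⊗[k] H) →ₗ[k] (A ⊗[k] H) :=
  TensorProduct.lift
    (((LinearMap.llcomp k (A ⊗[k] H) (A ⊗[k] H) (A ⊗[k] H)).comp
        (TensorProduct.curry
          ((LinearMap.rTensor H (LinearMap.mul' k A)) ∘ₗ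
            (TensorProduct.assoc k A A H).symm.toLinearMap))).compl₂
      (TensorProduct.curry
        ((LinearMap.rTensor H (LinearMap.mul' k A)) ∘ₗ
         (TensorProduct.map
            (TensorProduct.map (TensorProduct.lift σ) (TensorProduct.lift f))
            (LinearMap.mul' k H)) ∘ₗ
         (LinearMap.rTensor (H ⊗[k] H)
            (TensorProduct.tensorTensorTensorComm k H H A H).toLinearMap) ∘ₗ
         (TensorProduct.tensorTensorTensorComm k (H ⊗[k] H) H (A ⊗[k] H) H).toLinearMap ∘ₗ
         (TensorProduct.map
            ((LinearMap.rTensor H (Coalgebra.comul (R := k))) ∘ₗ (Coalgebra.comul (R := k)))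
            ((TensorProduct.assoc k A H H).symm.toLinearMap ∘ₗ
              (LinearMap.lTensor A (Coalgebra.comul (R := k))))))))

/-- The unit `1 # 1` of the crossed product. -/
def oneE : A ⊗[k] H := (1 : A) ⊗ₜ[k] (1 : H)

/-- The map `γ : H → A #_f H`, `γ(h) = 1 # h`. -/
def gam : H →ₗ[k] A ⊗[k] H := TensorProduct.mk k A H 1

/-- The map `h ↦ f⁻¹(S(h⁽²⁾), h⁽³⁾) # S(h⁽¹⁾)`, the convolution inverse of `γ`. -/
def gammaInv (finv : H →ₗ[k] H →ₗ[k] A) : H →ₗ[k] A ⊗[k] H :=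
  (TensorProduct.comm k H A).toLinearMap ∘ₗ
    (TensorProduct.map (HopfAlgebra.antipode (R := k))
      ((TensorProduct.lift finv) ∘ₗ (LinearMap.rTensor H (HopfAlgebra.antipode (R := k))))) ∘ₗ
    (LinearMap.lTensor H (Coalgebra.comul (R := k))) ∘ₗ (Coalgebra.comul (R := k))

/-- The canonical coaction `ν = id_A ⊗ Δ : A #_f H → (A #_f H) ⊗ H`. -/
def nuE : (A ⊗[k] H) →ₗ[k] (A ⊗[k] H) ⊗[k] H :=
  (TensorProduct.assoc k A H H).symm.toLinearMap ∘ₗ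
    (LinearMap.lTensor A (Coalgebra.comul (R := k)))

/-- Convolution product on `Hom_k(H, A #_f H)`: `(u * v)(h) = u(h⁽¹⁾) v(h⁽²⁾)`. -/
def convMul (σ : H →ₗ[k] A →ₗ[k] A) (f : H →ₗ[k] H →ₗ[k] A)
    (u v : H →ₗ[k] A ⊗[k] H) : H →ₗ[k] A ⊗[k] H :=
  (TensorProduct.lift (crossedMul k A H σ f)) ∘ₗ (TensorProduct.map u v) ∘ₗ
    (Coalgebra.comul (R := k))

/-- The unit of the convolution algebra `Hom_k(H, A #_f H)`: `h ↦ ε(h) 1_E`. -/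
def convOne : H →ₗ[k] A ⊗[k] H :=
  (LinearMap.toSpanSingleton k (A ⊗[k] H) (oneE k A H)) ∘ₗ (Coalgebra.counit (R := k))

/-- Sum over iterated (right-nested) Sweedler components:
`swSum n c₁ c₂ r h F = ∑ F (h⁽¹⁾, …, h⁽ʳ⁺¹⁾)`. -/
def swSum {M : Type*} [AddCommMonoid M] (n : H → ℕ) (c₁ c₂ : H → ℕ → H) :
    (r : ℕ) → H → ((Fin (r + 1) → H) → M) → M
  | 0, h, F => F (fun _ => h)
  | (r + 1), h, F =>
      ∑ i ∈ Finset.range (n h), swSum n c₁ c₂ r (c₂ h i) (fun g => F (Fin.cons (c₁ h i) g))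

/-- The product of a list of elements of the crossed product. -/
def prodE (σ : H →ₗ[k] A →ₗ[k] A) (f : H →ₗ[k] H →ₗ[k] A) :
    List (A ⊗[k] H) → A ⊗[k] H
  | [] => oneE k A H
  | x :: L => crossedMul k A H σ f x (prodE σ f L)

end CrossedProduct
section Statement8

variable (k A H : Type*) [CommRing k] [Ring A] [Algebra k A] [Ring H] [HopfAlgebra k H]

/-- The element `U(h₀,…,h_i) = γ(h₀⁽¹⁾) γ⁻¹(h_i⁽²⁾) ⋯ γ⁻¹(h₁⁽²⁾)
γ⁻¹(h₀⁽²⁾ S(h₁⁽¹⁾ ⋯ h_i⁽¹⁾))` of `E = A #_f H`. -/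
noncomputable def Udef (σ : H →ₗ[k] A →ₗ[k] A) (f finv : H →ₗ[k] H →ₗ[k] A)
    (n : H → ℕ) (c₁ c₂ : H → ℕ → H) {i : ℕ} (hh : Fin (i + 1) → H) : A ⊗[k] H :=
  ∑ p ∈ Fintype.piFinset (fun j : Fin (i + 1) => Finset.range (n (hh j))),
    crossedMul k A H σ f (gam k A H (c₁ (hh 0) (p 0)))
      (crossedMul k A H σ f
        (prodE k A H σ f
          ((List.ofFn (fun j : Fin i =>
            gammaInv k A H finv (c₂ (hh j.succ) (p j.succ)))).reverse))
        (gammaInv k A H finv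
          (c₂ (hh 0) (p 0) *
            HopfAlgebra.antipode (R := k)
              ((List.ofFn (fun j : Fin i => c₁ (hh j.succ) (p j.succ))).prod))))

end Statement8

section Aux1
open Coalgebra

variable {k : Type*} [CommRing k]
variable {C D R R' : Type*} [AddCommGroup C] [Module k C] [Coalgebra k C]
  [AddCommGroup D] [Module k D] [Coalgebra k D]
  [Ring R] [Algebra k R] [Ring R'] [Algebra k R']

/-- convolution product -/
noncomputable def cv (u v : C →ₗ[k] R) : C →ₗ[k] R :=
  LinearMap.mul' k R ∘ₗ TensorProduct.map u v ∘ₗ comul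

local infixl:70 " ⋆ " => cv

theorem cv_assoc (u v w : C →ₗ[k] R) : (u ⋆ v) ⋆ w = u ⋆ (v ⋆ w) :=
  congrArg WithConv.ofConv
    (mul_assoc (WithConv.toConv u) (WithConv.toConv v) (WithConv.toConv w))

theorem cv_repr {ι : Type*} (u v : C →ₗ[k] R) {x : C} {s : Finset ι} {a b : ι → C}
    (h : comul (R := k) x = ∑ i ∈ s, a i ⊗ₜ[k] b i) :
    (u ⋆ v) x = ∑ i ∈ s, u (a i) * v (b i) := by
  simp [cv, h]

theorem comul_tmul_repr {ι κ : Type*} {x : C} {y : D} {s : Finset ι} {a b : ι → C}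
    {t : Finset κ} {c d : κ → D}
    (h : comul (R := k) x = ∑ i ∈ s, a i ⊗ₜ[k] b i)
    (h' : comul (R := k) y = ∑ i ∈ t, c i ⊗ₜ[k] d i) :
    comul (R := k) (x ⊗ₜ[k] y) = ∑ i ∈ s, ∑ j ∈ t, (a i ⊗ₜ[k] c j) ⊗ₜ[k] (b i ⊗ₜ[k] d j) := by
  simp [TensorProduct.comul_tmul, h, h', TensorProduct.sum_tmul, TensorProduct.tmul_sum]
  try exact Finset.sum_comm

theorem cv_tmul {ι κ : Type*} (u v : C ⊗[k] D →ₗ[k] R) {x : C} {y : D} {s : Finset ι}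
    {a b : ι → C} {t : Finset κ} {c d : κ → D}
    (h : comul (R := k) x = ∑ i ∈ s, a i ⊗ₜ[k] b i)
    (h' : comul (R := k) y = ∑ i ∈ t, c i ⊗ₜ[k] d i) :
    (u ⋆ v) (x ⊗ₜ[k] y) = ∑ i ∈ s, ∑ j ∈ t, u (a i ⊗ₜ[k] c j) * v (b i ⊗ₜ[k] d j) := by
  simp [cv, comul_tmul_repr h h']

theorem comul_tmul_repr3 {E : Type*} [AddCommGroup E] [Module k E] [Coalgebra k E]
    {ι κ τ : Type*} {x : C} {y : D} {z : E} {s : Finset ι}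
    {a b : ι → C} {t : Finset κ} {c d : κ → D} {r : Finset τ} {e g : τ → E}
    (h : comul (R := k) x = ∑ i ∈ s, a i ⊗ₜ[k] b i)
    (h' : comul (R := k) y = ∑ i ∈ t, c i ⊗ₜ[k] d i)
    (h'' : comul (R := k) z = ∑ i ∈ r, e i ⊗ₜ[k] g i) :
    comul (R := k) (x ⊗ₜ[k] (y ⊗ₜ[k] z)) = ∑ i ∈ s, ∑ j ∈ t, ∑ l ∈ r,
      (a i ⊗ₜ[k] (c j ⊗ₜ[k] e l)) ⊗ₜ[k] (b i ⊗ₜ[k] (d j ⊗ₜ[k] g l)) := by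
  have hyz : comul (R := k) (y ⊗ₜ[k] z) = ∑ i ∈ t ×ˢ r,
      (c i.1 ⊗ₜ[k] e i.2) ⊗ₜ[k] (d i.1 ⊗ₜ[k] g i.2) := by
    rw [comul_tmul_repr h' h'', Finset.sum_product]
  rw [comul_tmul_repr h hyz]
  simp only [Finset.sum_product]

theorem comul_tmul_repr3' {E : Type*} [AddCommGroup E] [Module k E] [Coalgebra k E]
    {ι κ τ : Type*} {x : C} {y : D} {z : E} {s : Finset ι}
    {a b : ι → C} {t : Finset κ} {c d : κ → D} {r : Finset τ} {e g : τ → E}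
    (h : comul (R := k) x = ∑ i ∈ s, a i ⊗ₜ[k] b i)
    (h' : comul (R := k) y = ∑ i ∈ t, c i ⊗ₜ[k] d i)
    (h'' : comul (R := k) z = ∑ i ∈ r, e i ⊗ₜ[k] g i) :
    comul (R := k) ((x ⊗ₜ[k] y) ⊗ₜ[k] z) = ∑ i ∈ s, ∑ j ∈ t, ∑ l ∈ r,
      ((a i ⊗ₜ[k] c j) ⊗ₜ[k] e l) ⊗ₜ[k] ((b i ⊗ₜ[k] d j) ⊗ₜ[k] g l) := by
  have hxy : comul (R := k) (x ⊗ₜ[k] y) = ∑ i ∈ s ×ˢ t,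
      (a i.1 ⊗ₜ[k] c i.2) ⊗ₜ[k] (b i.1 ⊗ₜ[k] d i.2) := by
    rw [comul_tmul_repr h h', Finset.sum_product]
  rw [comul_tmul_repr hxy h'']
  simp only [Finset.sum_product]

theorem cv_tmul3 {E : Type*} [AddCommGroup E] [Module k E] [Coalgebra k E]
    {ι κ τ : Type*} (u v : C ⊗[k] (D ⊗[k] E) →ₗ[k] R) {x : C} {y : D} {z : E} {s : Finset ι}
    {a b : ι → C} {t : Finset κ} {c d : κ → D} {r : Finset τ} {e g : τ → E}
    (h : comul (R := k) x = ∑ i ∈ s, a i ⊗ₜ[k] b i)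
    (h' : comul (R := k) y = ∑ i ∈ t, c i ⊗ₜ[k] d i)
    (h'' : comul (R := k) z = ∑ i ∈ r, e i ⊗ₜ[k] g i) :
    (u ⋆ v) (x ⊗ₜ[k] (y ⊗ₜ[k] z)) = ∑ i ∈ s, ∑ j ∈ t, ∑ l ∈ r,
      u (a i ⊗ₜ[k] (c j ⊗ₜ[k] e l)) * v (b i ⊗ₜ[k] (d j ⊗ₜ[k] g l)) := by
  simp [cv, comul_tmul_repr3 h h' h'']

theorem cv_comp (u v : D →ₗ[k] R) (p : C →ₗ[k] D)
    (hp : comul ∘ₗ p = TensorProduct.map p p ∘ₗ comul) :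
    (u ⋆ v) ∘ₗ p = (u ∘ₗ p) ⋆ (v ∘ₗ p) := by
  simp only [cv, LinearMap.comp_assoc, hp, TensorProduct.map_comp]

theorem comp_cv (φ : R →ₐ[k] R') (u v : C →ₗ[k] R) :
    φ.toLinearMap ∘ₗ (u ⋆ v) = (φ.toLinearMap ∘ₗ u) ⋆ (φ.toLinearMap ∘ₗ v) :=
  LinearMap.algHom_comp_convMul_distrib φ (WithConv.toConv u) (WithConv.toConv v)

/-- convolution unit -/
noncomputable def cu (C R : Type*) [AddCommGroup C] [Module k C] [Coalgebra k C]
    [Ring R] [Algebra k R] : C →ₗ[k] R := Algebra.linearMap k R ∘ₗ counit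

theorem cv_one (u : C →ₗ[k] R) : u ⋆ cu C R = u :=
  congrArg WithConv.ofConv (mul_one (WithConv.toConv u))

theorem one_cv (u : C →ₗ[k] R) : cu C R ⋆ u = u :=
  congrArg WithConv.ofConv (one_mul (WithConv.toConv u))

theorem cu_comp (p : C →ₗ[k] D) (hp : counit ∘ₗ p = counit (R := k)) :
    (cu D R) ∘ₗ p = cu (k := k) C R := by
  simp only [cu, LinearMap.comp_assoc, hp]

theorem comp_cu (φ : R →ₐ[k] R') : φ.toLinearMap ∘ₗ (cu C R) = cu (k := k) C R' := by
  ext; simp [cu]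

/-- Tensor product of comultiplicative maps is comultiplicative -/
theorem comul_map {C' D' : Type*} [AddCommGroup C'] [Module k C'] [Coalgebra k C']
    [AddCommGroup D'] [Module k D'] [Coalgebra k D'] (p : C →ₗ[k] C') (q : D →ₗ[k] D')
    (hp : comul ∘ₗ p = TensorProduct.map p p ∘ₗ comul)
    (hq : comul ∘ₗ q = TensorProduct.map q q ∘ₗ comul) :
    comul ∘ₗ TensorProduct.map p q =
      TensorProduct.map (TensorProduct.map p q) (TensorProduct.map p q) ∘ₗ comul := by
  ext x y
  have h := congrArg (fun g => g x) hp
  have h' := congrArg (fun g => g y) hq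
  simp only [LinearMap.comp_apply, ← (ℛ k x).eq, ← (ℛ k y).eq, map_sum, TensorProduct.map_tmul]
    at h h'
  simp [comul_tmul_repr h h', comul_tmul_repr (ℛ k x).eq.symm (ℛ k y).eq.symm]

theorem counit_map {C' D' : Type*} [AddCommGroup C'] [Module k C'] [Coalgebra k C']
    [AddCommGroup D'] [Module k D'] [Coalgebra k D'] (p : C →ₗ[k] C') (q : D →ₗ[k] D')
    (hp : counit ∘ₗ p = counit (R := k))
    (hq : counit ∘ₗ q = counit (R := k)) :
    counit ∘ₗ TensorProduct.map p q = counit (R := k) := by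
  ext x y
  have h := congrArg (fun g => g x) hp
  have h' := congrArg (fun g => g y) hq
  simp only [LinearMap.comp_apply] at h h'
  simp [h, h']

variable {H : Type*} [Ring H]

theorem comul_mul' [Bialgebra k H] : comul ∘ₗ LinearMap.mul' k H =
    TensorProduct.map (LinearMap.mul' k H) (LinearMap.mul' k H) ∘ₗ comul := by
  ext x y
  have h := comul_tmul_repr (ℛ k x).eq.symm (ℛ k y).eq.symm
  simp only [TensorProduct.AlgebraTensorModule.curry_apply, TensorProduct.curry_apply,
    LinearMap.coe_restrictScalars, LinearMap.comp_apply, h, LinearMap.mul'_apply,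
    Bialgebra.comul_mul]
  rw [← (ℛ k x).eq, ← (ℛ k y).eq]
  simp [Finset.sum_mul_sum]

theorem counit_mul' [Bialgebra k H] : counit ∘ₗ LinearMap.mul' k H = counit (R := k) := by
  ext x y
  simp [mul_comm]

variable [HopfAlgebra k H]

/-- `S` is an anti-coalgebra map. -/
theorem comul_antipode' : comul ∘ₗ HopfAlgebra.antipode k (A := H) =
    TensorProduct.map (HopfAlgebra.antipode k) (HopfAlgebra.antipode k) ∘ₗ
      (TensorProduct.comm k H H).toLinearMap ∘ₗ comul := by
  let S := HopfAlgebra.antipode k (A := H)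
  let i1 := (Algebra.TensorProduct.includeLeft : H →ₐ[k] H ⊗[k] H)
  let i2 := (Algebra.TensorProduct.includeRight : H →ₐ[k] H ⊗[k] H)
  have hd : (comul : H →ₗ[k] H ⊗[k] H) = i1.toLinearMap ⋆ i2.toLinearMap := by
    ext x
    rw [cv_repr _ _ (ℛ k x).eq.symm, ← (ℛ k x).eq]
    simp [i1, i2]
  have hG : TensorProduct.map S S ∘ₗ (TensorProduct.comm k H H).toLinearMap ∘ₗ comul =
      (i2.toLinearMap ∘ₗ S) ⋆ (i1.toLinearMap ∘ₗ S) := by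
    ext x
    rw [cv_repr _ _ (ℛ k x).eq.symm]
    simp only [LinearMap.comp_apply]
    rw [← (ℛ k x).eq]
    simp [i1, i2]
  have hSid : S ⋆ LinearMap.id = cu H H := congrArg WithConv.ofConv LinearMap.antipode_mul_id
  have hleft : ((i2.toLinearMap ∘ₗ S) ⋆ (i1.toLinearMap ∘ₗ S)) ⋆ comul = cu H (H ⊗[k] H) := by
    rw [hd, cv_assoc, ← cv_assoc (i1.toLinearMap ∘ₗ S)]
    have h1 := comp_cv i1 S LinearMap.id
    have h2 := comp_cv i2 S LinearMap.id
    rw [hSid, comp_cu, LinearMap.comp_id] at h1 h2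
    rw [← h1, one_cv, ← h2]
  have hright : comul ⋆ (comul ∘ₗ S) = cu H (H ⊗[k] H) :=
    congrArg WithConv.ofConv LinearMap.comul_right_inv
  change comul ∘ₗ S = TensorProduct.map S S ∘ₗ _
  rw [hG, ← one_cv (comul ∘ₗ S), ← hleft, cv_assoc, hright, cv_one]

end Aux1

section Aux2
open Coalgebra

local infixl:70 " ⋆ " => cv

variable {k A H : Type*} [CommRing k] [Ring A] [Algebra k A] [Ring H] [HopfAlgebra k H]

/-- inclusion of `A` in the ordinary tensor product algebra. -/
noncomputable abbrev iA (k A H : Type*) [CommRing k] [Ring A] [Algebra k A] [Ring H]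
    [HopfAlgebra k H] : A →ₐ[k] A ⊗[k] H :=
  Algebra.TensorProduct.includeLeft

/-- inclusion of `H` in the ordinary tensor product algebra. -/
noncomputable abbrev iH (k A H : Type*) [CommRing k] [Ring A] [Algebra k A] [Ring H]
    [HopfAlgebra k H] : H →ₐ[k] A ⊗[k] H :=
  Algebra.TensorProduct.includeRight

/-- `T (h ⊗ m) = f(h₁, m₁) ⊗ h₂ m₂`. -/
noncomputable def TT (f : H →ₗ[k] H →ₗ[k] A) : H ⊗[k] H →ₗ[k] A ⊗[k] H :=
  ((iA k A H).toLinearMap ∘ₗ TensorProduct.lift f) ⋆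
    ((iH k A H).toLinearMap ∘ₗ LinearMap.mul' k H)

variable {σ : H →ₗ[k] A →ₗ[k] A} {f finv : H →ₗ[k] H →ₗ[k] A}
    {n : H → ℕ} {c₁ c₂ : H → ℕ → H}

theorem TT_tmul (hrep : IsSweedlerRep k H n c₁ c₂) (h m : H) :
    TT f (h ⊗ₜ[k] m) = ∑ i ∈ Finset.range (n h), ∑ j ∈ Finset.range (n m),
      f (c₁ h i) (c₁ m j) ⊗ₜ[k] (c₂ h i * c₂ m j) := by
  rw [TT, cv_tmul _ _ (hrep h) (hrep m)]
  simp

theorem crossedMul_tmul (hrep : IsSweedlerRep k H n c₁ c₂) (a c : A) (h m : H) :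
    crossedMul k A H σ f (a ⊗ₜ[k] h) (c ⊗ₜ[k] m) =
      iA k A H a * (((iA k A H).toLinearMap ∘ₗ σ.flip c) ⋆
        (TT f ∘ₗ (TensorProduct.mk k H H).flip m)) h := by
  have hT : TT f ∘ₗ (TensorProduct.mk k H H).flip m = ∑ j ∈ Finset.range (n m),
      ((iA k A H).toLinearMap ∘ₗ f.flip (c₁ m j)) ⋆
        ((iH k A H).toLinearMap ∘ₗ LinearMap.mulRight k (c₂ m j)) := by
    ext x
    simp only [LinearMap.comp_apply, LinearMap.flip_apply, TensorProduct.mk_apply,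
      LinearMap.sum_apply, TT_tmul hrep, cv_repr _ _ (hrep x)]
    rw [Finset.sum_comm]
    simp
  have hsum : ∀ (u : H →ₗ[k] A ⊗[k] H) (v : ℕ → H →ₗ[k] A ⊗[k] H) (s : Finset ℕ),
      u ⋆ (∑ j ∈ s, v j) = ∑ j ∈ s, u ⋆ v j := by
    intro u v s
    ext x
    simp only [LinearMap.sum_apply, cv_repr _ _ (hrep x), Finset.mul_sum]
    exact Finset.sum_comm
  rw [hT, hsum]
  simp only [← cv_assoc, LinearMap.sum_apply]
  simp only [crossedMul, TensorProduct.lift.tmul, LinearMap.comp_apply, LinearMap.compl₂_apply,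
    LinearMap.llcomp_apply, TensorProduct.curry_apply, TensorProduct.map_tmul,
    LinearEquiv.coe_coe, LinearMap.lTensor_tmul, hrep m, hrep h, cv_repr _ _ (hrep h),
    cv_repr _ _ (hrep (c₁ h _)), map_sum, TensorProduct.sum_tmul,
    TensorProduct.tmul_sum, LinearMap.rTensor_tmul, Finset.mul_sum, Finset.sum_mul,
    hrep (c₁ h _), TensorProduct.assoc_symm_tmul, TensorProduct.tensorTensorTensorComm_tmul]
  simp
  try rw [Finset.sum_comm]

/-- left multiplication by `1 # h` -/
noncomputable def Lh (σ : H →ₗ[k] A →ₗ[k] A) (f : H →ₗ[k] H →ₗ[k] A) :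
    H →ₗ[k] A ⊗[k] H →ₗ[k] A ⊗[k] H := crossedMul k A H σ f ∘ₗ gam k A H

theorem Lh_tmul (hrep : IsSweedlerRep k H n c₁ c₂) (c : A) (h m : H) :
    Lh σ f h (c ⊗ₜ[k] m) = (((iA k A H).toLinearMap ∘ₗ σ.flip c) ⋆
        (TT f ∘ₗ (TensorProduct.mk k H H).flip m)) h := by
  simp only [Lh, gam, LinearMap.comp_apply, TensorProduct.mk_apply, crossedMul_tmul hrep]
  simp [← Algebra.TensorProduct.one_def]

theorem crossedMul_eq (hrep : IsSweedlerRep k H n c₁ c₂) (a : A) (h : H) (z : A ⊗[k] H) :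
    crossedMul k A H σ f (a ⊗ₜ[k] h) z = iA k A H a * Lh σ f h z := by
  induction z with
  | zero => simp
  | add x y hx hy => simp only [map_add, hx, hy, mul_add]
  | tmul c m => rw [crossedMul_tmul hrep, Lh_tmul hrep]

theorem sigma_mul (hrep : IsSweedlerRep k H n c₁ c₂) (hweak : IsWeakAction k A H n c₁ c₂ σ)
    (a b : A) : σ.flip (a * b) = σ.flip a ⋆ σ.flip b := by
  ext h
  rw [cv_repr _ _ (hrep h)]
  exact hweak.1 h a b

theorem sigma_one (hweak : IsWeakAction k A H n c₁ c₂ σ) : σ.flip (1 : A) = cu H A := by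
  ext h
  simp [cu, hweak.2.1, Algebra.algebraMap_eq_smul_one]

theorem claim1 (hrep : IsSweedlerRep k H n c₁ c₂) (hweak : IsWeakAction k A H n c₁ c₂ σ)
    (b : A) (h : H) (z : A ⊗[k] H) :
    Lh σ f h (iA k A H b * z) = ∑ i ∈ Finset.range (n h),
      iA k A H (σ (c₁ h i) b) * Lh σ f (c₂ h i) z := by
  induction z with
  | zero => simp
  | add x y hx hy => simp only [map_add, hx, hy, mul_add, Finset.sum_add_distrib]
  | tmul c m =>
    have e : iA k A H b * c ⊗ₜ[k] m = (b * c) ⊗ₜ[k] m := by simp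
    rw [e, Lh_tmul hrep, sigma_mul hrep hweak, comp_cv, cv_assoc, cv_repr _ _ (hrep h)]
    simp only [Lh_tmul hrep]
    rfl

theorem Lh_gam (hrep : IsSweedlerRep k H n c₁ c₂) (hweak : IsWeakAction k A H n c₁ c₂ σ)
    (h m : H) : Lh σ f h (1 ⊗ₜ[k] m) = TT f (h ⊗ₜ[k] m) := by
  rw [Lh_tmul hrep, sigma_one hweak, comp_cu, one_cv]
  rfl

theorem TT_comp {C D : Type*} [AddCommGroup C] [Module k C] [Coalgebra k C]
    [AddCommGroup D] [Module k D] [Coalgebra k D] (p : C →ₗ[k] H) (q : D →ₗ[k] H)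
    (hp : comul ∘ₗ p = TensorProduct.map p p ∘ₗ comul)
    (hq : comul ∘ₗ q = TensorProduct.map q q ∘ₗ comul) :
    TT f ∘ₗ TensorProduct.map p q =
      ((iA k A H).toLinearMap ∘ₗ TensorProduct.lift f ∘ₗ TensorProduct.map p q) ⋆
      ((iH k A H).toLinearMap ∘ₗ LinearMap.mul' k H ∘ₗ TensorProduct.map p q) := by
  rw [TT, cv_comp _ _ _ (comul_map p q hp hq)]
  rfl

theorem counit_sum (hrep : IsSweedlerRep k H n c₁ c₂) (m : H) :
    ∑ p ∈ Finset.range (n m), counit (R := k) (c₁ m p) • c₂ m p = m := by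
  have := rTensor_counit_comul (R := k) m
  rw [hrep m] at this
  simpa using congrArg (TensorProduct.lid k H) this

theorem _root_.Finset.sum_comm3 {α β γ M : Type*} [AddCommMonoid M] (s : Finset α)
    (t : Finset β) (r : Finset γ) (F : α → β → γ → M) :
    ∑ x ∈ s, ∑ y ∈ t, ∑ z ∈ r, F x y z = ∑ z ∈ r, ∑ x ∈ s, ∑ y ∈ t, F x y z := by
  rw [Finset.sum_comm]
  simp only [fun y => Finset.sum_comm (s := s) (t := r) (f := fun x z => F x y z)]
  rw [Finset.sum_comm]
  refine Finset.sum_congr rfl fun z _ => Finset.sum_comm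

theorem claim2_gam (hrep : IsSweedlerRep k H n c₁ c₂) (hweak : IsWeakAction k A H n c₁ c₂ σ)
    (hcocycle : IsCocycle k A H n c₁ c₂ σ f) (h l m : H) :
    Lh σ f h (TT f (l ⊗ₜ[k] m)) = ∑ i ∈ Finset.range (n h), ∑ j ∈ Finset.range (n l),
      iA k A H (f (c₁ h i) (c₁ l j)) * TT f ((c₂ h i * c₂ l j) ⊗ₜ[k] m) := by
  let as := (TensorProduct.assoc k H H H).symm.toLinearMap
  have hid : comul ∘ₗ LinearMap.id (M := H) = TensorProduct.map LinearMap.id LinearMap.id ∘ₗ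
    comul (R := k) := by simp
  have has : comul ∘ₗ as = TensorProduct.map as as ∘ₗ comul (R := k) := by
    ext x y z
    have e1 := comul_tmul_repr3 (hrep x) (hrep y) (hrep z)
    have e2 := comul_tmul_repr3' (hrep x) (hrep y) (hrep z)
    simp only [TensorProduct.AlgebraTensorModule.curry_apply, TensorProduct.curry_apply,
      LinearMap.coe_restrictScalars, LinearMap.comp_apply, e1, as, LinearEquiv.coe_coe,
      TensorProduct.assoc_symm_tmul, e2, map_sum, TensorProduct.map_tmul]
  let u1 : H ⊗[k] (H ⊗[k] H) →ₗ[k] A :=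
    TensorProduct.lift σ ∘ₗ TensorProduct.map LinearMap.id (TensorProduct.lift f)
  let u2 : H ⊗[k] (H ⊗[k] H) →ₗ[k] A :=
    TensorProduct.lift f ∘ₗ TensorProduct.map LinearMap.id (LinearMap.mul' k H)
  let v1 : H ⊗[k] (H ⊗[k] H) →ₗ[k] A :=
    TensorProduct.lift ((LinearMap.mul k A).compl₂ (Algebra.linearMap k A)) ∘ₗ
      TensorProduct.map (TensorProduct.lift f) counit ∘ₗ as
  let v2 : H ⊗[k] (H ⊗[k] H) →ₗ[k] A :=
    (TensorProduct.lift f ∘ₗ TensorProduct.map (LinearMap.mul' k H) LinearMap.id) ∘ₗ as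
  have hc : u1 ⋆ u2 = v1 ⋆ v2 := by
    ext x y z
    have e1 := cv_tmul3 u1 u2 (hrep x) (hrep y) (hrep z)
    have e2 := cv_tmul3 v1 v2 (hrep x) (hrep y) (hrep z)
    simp only [TensorProduct.AlgebraTensorModule.curry_apply, TensorProduct.curry_apply,
      LinearMap.coe_restrictScalars, e1, e2]
    simp only [u1, u2, v1, v2, as, LinearMap.comp_apply, TensorProduct.map_tmul,
      TensorProduct.lift.tmul, LinearMap.id_apply, LinearMap.mul'_apply, LinearEquiv.coe_coe,
      TensorProduct.assoc_symm_tmul, hcocycle x y z]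
    refine Finset.sum_congr rfl fun i _ => Finset.sum_congr rfl fun j _ => ?_
    conv_lhs => rw [← counit_sum hrep z]
    simp [Finset.mul_sum, Algebra.algebraMap_eq_smul_one]
  have hL : Lh σ f h (TT f (l ⊗ₜ[k] m)) = (((iA k A H).toLinearMap ∘ₗ u1) ⋆
      (TT f ∘ₗ TensorProduct.map LinearMap.id (LinearMap.mul' k H))) (h ⊗ₜ (l ⊗ₜ m)) := by
    rw [cv_tmul3 _ _ (hrep h) (hrep l) (hrep m), TT_tmul hrep]
    simp only [map_sum, Lh_tmul hrep, cv_repr _ _ (hrep h)]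
    rw [Finset.sum_comm3]
    simp [u1]
  have hR : ∑ i ∈ Finset.range (n h), ∑ j ∈ Finset.range (n l),
      iA k A H (f (c₁ h i) (c₁ l j)) * TT f ((c₂ h i * c₂ l j) ⊗ₜ[k] m) =
      (((iA k A H).toLinearMap ∘ₗ v1) ⋆
      ((TT f ∘ₗ TensorProduct.map (LinearMap.mul' k H) LinearMap.id) ∘ₗ as))
        (h ⊗ₜ (l ⊗ₜ m)) := by
    rw [cv_tmul3 _ _ (hrep h) (hrep l) (hrep m)]
    refine Finset.sum_congr rfl fun i _ => Finset.sum_congr rfl fun j _ => ?_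
    conv_lhs => rw [← counit_sum hrep m]
    simp [Finset.mul_sum, Algebra.algebraMap_eq_smul_one, v1, as,
      TensorProduct.tmul_sum, ← TensorProduct.smul_tmul']
  rw [hL, hR, TT_comp _ _ hid comul_mul', TT_comp _ _ comul_mul' hid, cv_comp _ _ _ has,
    ← cv_assoc, ← cv_assoc]
  have e1 := comp_cv (iA k A H) u1 u2
  have e2 := comp_cv (iA k A H) v1 v2
  rw [hc] at e1
  have e3 := e1.symm.trans e2
  have e4 : LinearMap.mul' k H ∘ₗ TensorProduct.map LinearMap.id (LinearMap.mul' k H) =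
      (LinearMap.mul' k H ∘ₗ TensorProduct.map (LinearMap.mul' k H) LinearMap.id) ∘ₗ as := by
    ext x y z
    simp [as, mul_assoc]
  have e5 := congrArg (fun X => (X ⋆ ((iH k A H).toLinearMap ∘ₗ LinearMap.mul' k H ∘ₗ
    TensorProduct.map LinearMap.id (LinearMap.mul' k H))) (h ⊗ₜ (l ⊗ₜ m))) e3
  rw [e4] at e5 ⊢
  exact e5

theorem claim2 (hrep : IsSweedlerRep k H n c₁ c₂) (hweak : IsWeakAction k A H n c₁ c₂ σ)
    (hcocycle : IsCocycle k A H n c₁ c₂ σ f) (htwisted : IsTwistedModule k A H n c₁ c₂ σ f)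
    (h l : H) (z : A ⊗[k] H) :
    Lh σ f h (Lh σ f l z) = ∑ i ∈ Finset.range (n h), ∑ j ∈ Finset.range (n l),
      iA k A H (f (c₁ h i) (c₁ l j)) * Lh σ f (c₂ h i * c₂ l j) z := by
  induction z with
  | zero => simp
  | add x y hx hy => simp only [map_add, hx, hy, mul_add, Finset.sum_add_distrib]
  | tmul c m =>
    let Tm : H →ₗ[k] A ⊗[k] H := TT f ∘ₗ (TensorProduct.mk k H H).flip m
    let P : H ⊗[k] H →ₗ[k] A := TensorProduct.lift (σ.compl₂ (σ.flip c))
    let V1 : H ⊗[k] H →ₗ[k] A ⊗[k] H := TensorProduct.lift ((Lh σ f).compl₂ Tm)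
    have hV : V1 = ((iA k A H).toLinearMap ∘ₗ TensorProduct.lift f) ⋆
        (Tm ∘ₗ LinearMap.mul' k H) := by
      ext x y
      have e := cv_tmul ((iA k A H).toLinearMap ∘ₗ TensorProduct.lift f)
        (Tm ∘ₗ LinearMap.mul' k H) (hrep x) (hrep y)
      simp only [TensorProduct.AlgebraTensorModule.curry_apply, TensorProduct.curry_apply,
        LinearMap.coe_restrictScalars, e]
      exact claim2_gam hrep hweak hcocycle x y m
    have hP : P ⋆ TensorProduct.lift f =
        TensorProduct.lift f ⋆ (σ.flip c ∘ₗ LinearMap.mul' k H) := by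
      ext x y
      have e1 := cv_tmul P (TensorProduct.lift f) (hrep x) (hrep y)
      have e2 := cv_tmul (TensorProduct.lift f)
        (σ.flip c ∘ₗ LinearMap.mul' k H) (hrep x) (hrep y)
      simp only [TensorProduct.AlgebraTensorModule.curry_apply, TensorProduct.curry_apply,
        LinearMap.coe_restrictScalars, e1, e2]
      exact htwisted x y c
    have e0 : c ⊗ₜ[k] m = iA k A H c * 1 ⊗ₜ[k] m := by simp
    have hL : Lh σ f h (Lh σ f l (c ⊗ₜ[k] m)) =
        (((iA k A H).toLinearMap ∘ₗ P) ⋆ V1) (h ⊗ₜ l) := by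
      rw [cv_tmul _ _ (hrep h) (hrep l), e0, claim1 hrep hweak, map_sum]
      simp only [claim1 hrep hweak, Lh_gam hrep hweak]
      rw [Finset.sum_comm]
      rfl
    have hR : ∑ i ∈ Finset.range (n h), ∑ j ∈ Finset.range (n l),
        iA k A H (f (c₁ h i) (c₁ l j)) * Lh σ f (c₂ h i * c₂ l j) (c ⊗ₜ[k] m) =
        (((iA k A H).toLinearMap ∘ₗ TensorProduct.lift f) ⋆
          ((((iA k A H).toLinearMap ∘ₗ σ.flip c) ⋆ Tm) ∘ₗ LinearMap.mul' k H)) (h ⊗ₜ l) := by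
      rw [cv_tmul _ _ (hrep h) (hrep l)]
      simp only [Lh_tmul hrep]
      rfl
    rw [hL, hR, hV, cv_comp _ _ _ comul_mul', ← cv_assoc, ← cv_assoc, ← comp_cv, hP, comp_cv]
    rfl

theorem crossedMul_iA (hrep : IsSweedlerRep k H n c₁ c₂) (a : A) (w z : A ⊗[k] H) :
    crossedMul k A H σ f (iA k A H a * w) z = iA k A H a * crossedMul k A H σ f w z := by
  induction w with
  | zero => simp
  | add x y hx hy => simp only [map_add, LinearMap.add_apply, hx, hy, mul_add]
  | tmul c m =>
    have e : iA k A H a * c ⊗ₜ[k] m = (a * c) ⊗ₜ[k] m := by simp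
    rw [e, crossedMul_eq hrep, crossedMul_eq hrep, map_mul, mul_assoc]

theorem crossedMul_assoc (hrep : IsSweedlerRep k H n c₁ c₂)
    (hweak : IsWeakAction k A H n c₁ c₂ σ)
    (hcocycle : IsCocycle k A H n c₁ c₂ σ f) (htwisted : IsTwistedModule k A H n c₁ c₂ σ f)
    (x y z : A ⊗[k] H) :
    crossedMul k A H σ f (crossedMul k A H σ f x y) z =
      crossedMul k A H σ f x (crossedMul k A H σ f y z) := by
  induction x with
  | zero => simp
  | add x x' hx hy => simp only [map_add, LinearMap.add_apply, hx, hy]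
  | tmul a h =>
  induction y with
  | zero => simp
  | add x x' hx hy => simp only [map_add, LinearMap.add_apply, hx, hy]
  | tmul b l =>
    have hT : ∀ g : H, crossedMul k A H σ f (TT f (g ⊗ₜ[k] l)) z =
        Lh σ f g (Lh σ f l z) := by
      intro g
      rw [TT_tmul hrep, claim2 hrep hweak hcocycle htwisted]
      simp only [map_sum, LinearMap.sum_apply, crossedMul_eq hrep]
    have e0 : b ⊗ₜ[k] l = iA k A H b * 1 ⊗ₜ[k] l := by simp
    rw [crossedMul_eq hrep a h, crossedMul_eq hrep a h, crossedMul_iA hrep, crossedMul_eq hrep b,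
      claim1 hrep hweak, e0, claim1 hrep hweak]
    simp only [map_sum, LinearMap.sum_apply, crossedMul_iA hrep, Lh_gam hrep hweak, hT]

theorem TT_one_left (hrep : IsSweedlerRep k H n c₁ c₂) (hnormal : IsNormal k A H f) (m : H) :
    TT f (1 ⊗ₜ[k] m) = 1 ⊗ₜ[k] m := by
  have h1 : comul (R := k) (1 : H) = ∑ _i ∈ Finset.range 1, (1 : H) ⊗ₜ[k] (1 : H) := by
    simp [Algebra.TensorProduct.one_def]
  rw [TT, cv_tmul _ _ h1 (hrep m)]
  conv_rhs => rw [← counit_sum hrep m]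
  simp [(hnormal _).2, TensorProduct.tmul_sum, ← TensorProduct.smul_tmul']

theorem TT_one_right (hrep : IsSweedlerRep k H n c₁ c₂) (hnormal : IsNormal k A H f) (m : H) :
    TT f (m ⊗ₜ[k] 1) = 1 ⊗ₜ[k] m := by
  have h1 : comul (R := k) (1 : H) = ∑ _i ∈ Finset.range 1, (1 : H) ⊗ₜ[k] (1 : H) := by
    simp [Algebra.TensorProduct.one_def]
  rw [TT, cv_tmul _ _ (hrep m) h1]
  conv_rhs => rw [← counit_sum hrep m]
  simp [(hnormal _).1, TensorProduct.tmul_sum, ← TensorProduct.smul_tmul']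

theorem crossedMul_one_left (hrep : IsSweedlerRep k H n c₁ c₂)
    (hweak : IsWeakAction k A H n c₁ c₂ σ) (hnormal : IsNormal k A H f) (x : A ⊗[k] H) :
    crossedMul k A H σ f (oneE k A H) x = x := by
  have h1 : comul (R := k) (1 : H) = ∑ _i ∈ Finset.range 1, (1 : H) ⊗ₜ[k] (1 : H) := by
    simp [Algebra.TensorProduct.one_def]
  induction x with
  | zero => simp
  | add x x' hx hy => simp only [map_add, hx, hy]
  | tmul c m =>
    rw [oneE, crossedMul_tmul hrep, cv_repr _ _ h1]
    simp [hweak.2.2, TT_one_left hrep hnormal]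

theorem crossedMul_one_right (hrep : IsSweedlerRep k H n c₁ c₂)
    (hweak : IsWeakAction k A H n c₁ c₂ σ) (hnormal : IsNormal k A H f) (x : A ⊗[k] H) :
    crossedMul k A H σ f x (oneE k A H) = x := by
  induction x with
  | zero => simp
  | add x x' hx hy => simp only [map_add, LinearMap.add_apply, hx, hy]
  | tmul c m =>
    rw [crossedMul_eq hrep, oneE, Lh_gam hrep hweak, TT_one_right hrep hnormal]
    simp

/-- coaction as an algebra map for the ordinary tensor product structures -/
noncomputable def nuo (k A H : Type*) [CommRing k] [Ring A] [Algebra k A] [Ring H]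
    [HopfAlgebra k H] : A ⊗[k] H →ₐ[k] (A ⊗[k] H) ⊗[k] H :=
  (Algebra.TensorProduct.assoc k k k A H H).symm.toAlgHom.comp
    (Algebra.TensorProduct.map (AlgHom.id k A) (Bialgebra.comulAlgHom k H))

theorem nuo_eq : (nuo k A H).toLinearMap = nuE k A H := by
  ext a h
  simp [nuo, nuE]
  rfl

/-- ordinary inclusion -/
noncomputable abbrev j1 (k E H : Type*) [CommRing k] [Ring E] [Algebra k E] [Ring H]
    [HopfAlgebra k H] : E →ₐ[k] E ⊗[k] H :=
  Algebra.TensorProduct.includeLeft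

theorem nu_iA : (nuo k A H).toLinearMap ∘ₗ (iA k A H).toLinearMap =
    (j1 k (A ⊗[k] H) H).toLinearMap ∘ₗ (iA k A H).toLinearMap := by
  ext a
  simp [nuo, Algebra.TensorProduct.one_def]

theorem nu_iH (hrep : IsSweedlerRep k H n c₁ c₂) :
    (nuo k A H).toLinearMap ∘ₗ (iH k A H).toLinearMap =
    ((j1 k (A ⊗[k] H) H).toLinearMap ∘ₗ (iH k A H).toLinearMap) ⋆
      (iH k (A ⊗[k] H) H).toLinearMap := by
  ext h
  rw [cv_repr _ _ (hrep h), nuo_eq]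
  simp [nuE, hrep h, TensorProduct.tmul_sum]

theorem nu_TT (hrep : IsSweedlerRep k H n c₁ c₂) :
    nuE k A H ∘ₗ TT f = ((j1 k (A ⊗[k] H) H).toLinearMap ∘ₗ TT f) ⋆
      ((iH k (A ⊗[k] H) H).toLinearMap ∘ₗ LinearMap.mul' k H) := by
  rw [← nuo_eq, TT, comp_cv, comp_cv, ← LinearMap.comp_assoc, nu_iA, ← LinearMap.comp_assoc,
    nu_iH hrep, cv_comp _ _ _ comul_mul', ← cv_assoc]
  rfl

theorem nu_mul (hrep : IsSweedlerRep k H n c₁ c₂) (a b : A) (h l : H) :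
    nuE k A H (crossedMul k A H σ f (a ⊗ₜ[k] h) (b ⊗ₜ[k] l)) =
      ∑ i ∈ Finset.range (n h), ∑ j ∈ Finset.range (n l),
        (crossedMul k A H σ f (a ⊗ₜ[k] c₁ h i) (b ⊗ₜ[k] c₁ l j)) ⊗ₜ[k] (c₂ h i * c₂ l j) := by
  let Lb : H ⊗[k] H →ₗ[k] A ⊗[k] H :=
    TensorProduct.lift ((Lh σ f).compl₂ (TensorProduct.mk k A H b))
  let P : H ⊗[k] H →ₗ[k] A := σ.flip b ∘ₗ (TensorProduct.rid k H).toLinearMap ∘ₗ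
    LinearMap.lTensor H counit
  have hLb : Lb = ((iA k A H).toLinearMap ∘ₗ P) ⋆ TT f := by
    ext x y
    have e1 := cv_tmul ((iA k A H).toLinearMap ∘ₗ P) (TT f) (hrep x) (hrep y)
    simp only [TensorProduct.AlgebraTensorModule.curry_apply, TensorProduct.curry_apply,
        LinearMap.coe_restrictScalars, e1]
    simp only [Lb, TensorProduct.lift.tmul, LinearMap.compl₂_apply, TensorProduct.mk_apply,
      Lh_tmul hrep, cv_repr _ _ (hrep x)]
    refine Finset.sum_congr rfl fun i _ => ?_
    simp only [LinearMap.comp_apply, LinearMap.flip_apply, TensorProduct.mk_apply]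
    conv_lhs => rw [← counit_sum hrep y]
    simp [P, Finset.mul_sum, TensorProduct.tmul_sum, ← TensorProduct.smul_tmul']
  have hnu : nuE k A H ∘ₗ Lb = ((j1 k (A ⊗[k] H) H).toLinearMap ∘ₗ Lb) ⋆
      ((iH k (A ⊗[k] H) H).toLinearMap ∘ₗ LinearMap.mul' k H) := by
    rw [hLb, comp_cv, cv_assoc, ← nu_TT hrep, ← nuo_eq, comp_cv, ← LinearMap.comp_assoc,
      nu_iA, LinearMap.comp_assoc]
  have hnu' := congrArg (fun g => g (h ⊗ₜ l)) hnu
  simp only [cv_tmul _ _ (hrep h) (hrep l)] at hnu'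
  have ha : ∀ w, nuE k A H (iA k A H a * w) =
      (j1 k (A ⊗[k] H) H) (iA k A H a) * nuE k A H w := by
    intro w
    rw [← nuo_eq]
    have := congrArg (fun g => g a) (nu_iA (k := k) (A := A) (H := H))
    simp only [LinearMap.comp_apply, AlgHom.toLinearMap_apply] at this
    simp only [AlgHom.toLinearMap_apply, map_mul, this]
  rw [crossedMul_eq hrep, ha]
  change _ * (nuE k A H ∘ₗ Lb) (h ⊗ₜ l) = _
  change (nuE k A H ∘ₗ Lb) (h ⊗ₜ l) = _ at hnu'
  rw [hnu']
  simp only [crossedMul_eq hrep, Finset.mul_sum]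
  simp [Lb]


theorem coassoc_sum (hrep : IsSweedlerRep k H n c₁ c₂) {M : Type*} [AddCommGroup M] [Module k M]
    (F : H ⊗[k] (H ⊗[k] H) →ₗ[k] M) (h : H) :
    ∑ i ∈ Finset.range (n h), ∑ j ∈ Finset.range (n (c₁ h i)),
      F (c₁ (c₁ h i) j ⊗ₜ (c₂ (c₁ h i) j ⊗ₜ c₂ h i)) =
    ∑ i ∈ Finset.range (n h), ∑ j ∈ Finset.range (n (c₂ h i)),
      F (c₁ h i ⊗ₜ (c₁ (c₂ h i) j ⊗ₜ c₂ (c₂ h i) j)) := by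
  have := congrArg F (Coalgebra.coassoc_apply (R := k) h)
  rw [hrep h] at this
  simpa only [map_sum, LinearMap.rTensor_tmul, LinearMap.lTensor_tmul, hrep (c₁ h _),
    hrep (c₂ h _), TensorProduct.sum_tmul, TensorProduct.tmul_sum,
    TensorProduct.assoc_tmul] using this

/-- `q h = f⁻¹(S h₁, h₂)` -/
noncomputable def qq (finv : H →ₗ[k] H →ₗ[k] A) : H →ₗ[k] A :=
  TensorProduct.lift finv ∘ₗ LinearMap.rTensor H (HopfAlgebra.antipode k) ∘ₗ comul

theorem qq_apply (hrep : IsSweedlerRep k H n c₁ c₂) (h : H) :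
    qq finv h = ∑ i ∈ Finset.range (n h), finv (HopfAlgebra.antipode k (c₁ h i)) (c₂ h i) := by
  simp [qq, hrep h]

theorem gammaInv_apply (hrep : IsSweedlerRep k H n c₁ c₂) (h : H) :
    gammaInv k A H finv h = ∑ i ∈ Finset.range (n h),
      qq finv (c₂ h i) ⊗ₜ[k] HopfAlgebra.antipode k (c₁ h i) := by
  simp [gammaInv, hrep h, qq]

theorem gammaInv_cv (hrep : IsSweedlerRep k H n c₁ c₂) :
    gammaInv k A H finv = ((iH k A H).toLinearMap ∘ₗ HopfAlgebra.antipode k) ⋆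
      ((iA k A H).toLinearMap ∘ₗ qq finv) := by
  ext h
  rw [gammaInv_apply hrep, cv_repr _ _ (hrep h)]
  simp

theorem comul_antipode_sum (hrep : IsSweedlerRep k H n c₁ c₂) (h : H) :
    comul (R := k) (HopfAlgebra.antipode k h) = ∑ i ∈ Finset.range (n h),
      HopfAlgebra.antipode k (c₂ h i) ⊗ₜ[k] HopfAlgebra.antipode k (c₁ h i) := by
  have := congrArg (fun g => g h) (comul_antipode' (k := k) (H := H))
  simpa [hrep h] using this

theorem nu_gammaInv (hrep : IsSweedlerRep k H n c₁ c₂) :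
    nuE k A H ∘ₗ gammaInv k A H finv =
      ((iH k (A ⊗[k] H) H).toLinearMap ∘ₗ HopfAlgebra.antipode k) ⋆
      ((j1 k (A ⊗[k] H) H).toLinearMap ∘ₗ gammaInv k A H finv) := by
  have hS : (nuo k A H).toLinearMap ∘ₗ (iH k A H).toLinearMap ∘ₗ HopfAlgebra.antipode k =
      ((iH k (A ⊗[k] H) H).toLinearMap ∘ₗ HopfAlgebra.antipode k) ⋆
      ((j1 k (A ⊗[k] H) H).toLinearMap ∘ₗ (iH k A H).toLinearMap ∘ₗ HopfAlgebra.antipode k) := by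
    ext h
    rw [cv_repr _ _ (hrep h), nuo_eq]
    simp [nuE, comul_antipode_sum hrep h, TensorProduct.tmul_sum]
  rw [gammaInv_cv hrep, ← nuo_eq, comp_cv, hS, comp_cv, ← cv_assoc,
    ← LinearMap.comp_assoc (qq finv) (iA k A H).toLinearMap (nuo k A H).toLinearMap, nu_iA]
  rfl

theorem finv_TT (hrep : IsSweedlerRep k H n c₁ c₂) (hinv : IsConvInverse k A H n c₁ c₂ f finv) :
    ((iA k A H).toLinearMap ∘ₗ TensorProduct.lift finv) ⋆ TT f =
      (iH k A H).toLinearMap ∘ₗ LinearMap.mul' k H := by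
  have h1 : TensorProduct.lift finv ⋆ TensorProduct.lift f = cu (k := k) (H ⊗[k] H) A := by
    ext x y
    have e1 := cv_tmul (TensorProduct.lift finv) (TensorProduct.lift f) (hrep x) (hrep y)
    simp only [TensorProduct.AlgebraTensorModule.curry_apply, TensorProduct.curry_apply,
        LinearMap.coe_restrictScalars, e1, TensorProduct.lift.tmul, (hinv x y).2]
    simp [cu, Algebra.algebraMap_eq_smul_one, mul_comm, mul_smul]
  rw [TT, ← cv_assoc, ← comp_cv, h1, comp_cu, one_cv]

theorem gammaInv_gam (hrep : IsSweedlerRep k H n c₁ c₂) (hweak : IsWeakAction k A H n c₁ c₂ σ)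
    (hinv : IsConvInverse k A H n c₁ c₂ f finv) (h : H) :
    ∑ i ∈ Finset.range (n h), crossedMul k A H σ f (gammaInv k A H finv (c₁ h i))
      (gam k A H (c₂ h i)) = counit (R := k) h • oneE k A H := by
  let S := HopfAlgebra.antipode k (A := H)
  let Q : H ⊗[k] H →ₗ[k] A ⊗[k] H :=
    (iA k A H).toLinearMap ∘ₗ TensorProduct.lift finv ∘ₗ TensorProduct.map S LinearMap.id
  let F1 : H ⊗[k] (H ⊗[k] H) →ₗ[k] A ⊗[k] H := LinearMap.mul' k (A ⊗[k] H) ∘ₗ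
    TensorProduct.map ((iA k A H).toLinearMap ∘ₗ qq finv)
      (TT f ∘ₗ TensorProduct.map S LinearMap.id) ∘ₗ
    (TensorProduct.leftComm k H H H).toLinearMap
  let F2 : H → H ⊗[k] (H ⊗[k] H) →ₗ[k] A ⊗[k] H := fun a => LinearMap.mul' k (A ⊗[k] H) ∘ₗ
    TensorProduct.map Q (TT f ∘ₗ TensorProduct.mk k H H (S a)) ∘ₗ
    (TensorProduct.assoc k H H H).symm.toLinearMap
  let F3 : H ⊗[k] (H ⊗[k] H) →ₗ[k] A ⊗[k] H := LinearMap.mul' k (A ⊗[k] H) ∘ₗ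
    TensorProduct.map Q (TT f ∘ₗ TensorProduct.map S LinearMap.id) ∘ₗ
    (TensorProduct.tensorTensorTensorComm k H H H H).toLinearMap ∘ₗ
    TensorProduct.map (TensorProduct.comm k H H).toLinearMap comul ∘ₗ
    (TensorProduct.assoc k H H H).symm.toLinearMap
  have hF1 : ∀ a g d, F1 (a ⊗ₜ (g ⊗ₜ d)) = iA k A H (qq finv g) * TT f (S a ⊗ₜ d) := by
    intro a g d; simp [F1]
  have hF2 : ∀ a b c d, F2 a (b ⊗ₜ (c ⊗ₜ d)) = iA k A H (finv (S b) c) * TT f (S a ⊗ₜ d) := by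
    intro a b c d; simp [F2, Q]
  have hF3 : ∀ a b y, F3 (a ⊗ₜ (b ⊗ₜ y)) = ∑ l ∈ Finset.range (n y),
      iA k A H (finv (S b) (c₁ y l)) * TT f (S a ⊗ₜ c₂ y l) := by
    intro a b y; simp [F3, Q, hrep y, TensorProduct.tmul_sum]
  have hL : ∀ g d, crossedMul k A H σ f (gammaInv k A H finv g) (gam k A H d) =
      ∑ j ∈ Finset.range (n g), F1 (c₁ g j ⊗ₜ (c₂ g j ⊗ₜ d)) := by
    intro g d
    rw [gammaInv_apply hrep]
    simp only [map_sum, LinearMap.sum_apply, crossedMul_eq hrep, gam, TensorProduct.mk_apply,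
      Lh_gam hrep hweak, hF1]
    rfl
  have hfin : ∀ g y, ∑ j ∈ Finset.range (n g), F3 (c₁ g j ⊗ₜ (c₂ g j ⊗ₜ y)) =
      1 ⊗ₜ[k] (S g * y) := by
    intro g y
    have := congrArg (fun X => X (S g ⊗ₜ y)) (finv_TT hrep hinv)
    have e := cv_tmul ((iA k A H).toLinearMap ∘ₗ TensorProduct.lift finv) (TT f)
      (comul_antipode_sum hrep g) (hrep y)
    have t := e.symm.trans this
    simp only [hF3]
    simpa using t
  have hmid : ∀ a r, ∑ j ∈ Finset.range (n r), F1 (a ⊗ₜ (c₁ r j ⊗ₜ c₂ r j)) =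
      ∑ j ∈ Finset.range (n r), F3 (a ⊗ₜ (c₁ r j ⊗ₜ c₂ r j)) := by
    intro a r
    have := coassoc_sum hrep (F2 a) r
    simp only [hF2] at this
    simp only [hF1, hF3, ← this, qq_apply hrep, map_sum, Finset.sum_mul]
    rfl
  simp only [hL]
  rw [coassoc_sum hrep]
  simp only [hmid]
  rw [← coassoc_sum hrep]
  simp only [hfin]
  rw [← TensorProduct.tmul_sum]
  have := HopfAlgebra.mul_antipode_rTensor_comul_apply (R := k) h
  rw [hrep h] at this
  simp only [map_sum, LinearMap.rTensor_tmul, LinearMap.mul'_apply] at this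
  change 1 ⊗ₜ[k] (∑ i ∈ Finset.range (n h), HopfAlgebra.antipode k (c₁ h i) * c₂ h i) = _
  rw [this, Algebra.algebraMap_eq_smul_one, TensorProduct.tmul_smul]
  rfl

end Aux2

section Aux3
open Coalgebra

local infixl:70 " ⋆ " => cv

universe uH

variable {k E : Type*} {H : Type uH} [CommRing k] [Ring E] [Algebra k E] [Ring H] [HopfAlgebra k H]
  (ν : E →ₐ[k] E ⊗[k] H) (γ γ' : H →ₗ[k] E)

/-- compatibility of a linear map `W : C → E` with the coaction -/
def NuComp {C : Type*} [AddCommGroup C] [Module k C] [Coalgebra k C]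
    (ν : E →ₐ[k] E ⊗[k] H) (W : C →ₗ[k] E) (ρ : C →ₗ[k] H) : Prop :=
  ν.toLinearMap ∘ₗ W = ((j1 k E H).toLinearMap ∘ₗ W) ⋆ ((iH k E H).toLinearMap ∘ₗ ρ)

theorem NuComp.apply {C : Type*} [AddCommGroup C] [Module k C] [Coalgebra k C]
    {ν : E →ₐ[k] E ⊗[k] H} {W : C →ₗ[k] E} {ρ : C →ₗ[k] H} (h : NuComp ν W ρ)
    {ι : Type*} {x : C} {s : Finset ι} {a b : ι → C}
    (hx : comul (R := k) x = ∑ i ∈ s, a i ⊗ₜ[k] b i) :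
    ν (W x) = ∑ i ∈ s, W (a i) ⊗ₜ[k] ρ (b i) := by
  have := congrArg (fun X => X x) h
  simpa [cv_repr _ _ hx] using this

theorem NuComp.mul {C D : Type*} [AddCommGroup C] [Module k C] [Coalgebra k C]
    [AddCommGroup D] [Module k D] [Coalgebra k D]
    {ν : E →ₐ[k] E ⊗[k] H} {W : C →ₗ[k] E} {ρ : C →ₗ[k] H} (h : NuComp ν W ρ)
    {W' : D →ₗ[k] E} {ρ' : D →ₗ[k] H} (h' : NuComp ν W' ρ') :
    NuComp ν (LinearMap.mul' k E ∘ₗ TensorProduct.map W W')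
      (LinearMap.mul' k H ∘ₗ TensorProduct.map ρ ρ') := by
  unfold NuComp
  ext x y
  have e := cv_tmul ((j1 k E H).toLinearMap ∘ₗ LinearMap.mul' k E ∘ₗ TensorProduct.map W W')
    ((iH k E H).toLinearMap ∘ₗ LinearMap.mul' k H ∘ₗ TensorProduct.map ρ ρ')
    (ℛ k x).eq.symm (ℛ k y).eq.symm
  simp only [TensorProduct.AlgebraTensorModule.curry_apply, TensorProduct.curry_apply,
        LinearMap.coe_restrictScalars, e]
  simp [h.apply (ℛ k x).eq.symm, h'.apply (ℛ k y).eq.symm, Finset.sum_mul_sum]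

theorem main_abs {C : Type*} [AddCommGroup C] [Module k C] [Coalgebra k C]
    {ν : E →ₐ[k] E ⊗[k] H} {γ γ' : H →ₗ[k] E} {W : C →ₗ[k] E} {ρ : C →ₗ[k] H}
    (hW : NuComp ν W ρ)
    (hρ : comul ∘ₗ ρ = TensorProduct.map ρ ρ ∘ₗ comul)
    (hρ' : counit ∘ₗ ρ = counit (R := k))
    (hγ' : ν.toLinearMap ∘ₗ γ' = ((iH k E H).toLinearMap ∘ₗ HopfAlgebra.antipode k) ⋆
      ((j1 k E H).toLinearMap ∘ₗ γ'))
    (hinv : γ' ⋆ γ = cu H E) :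
    (∀ x, ν ((W ⋆ (γ' ∘ₗ ρ)) x) = (W ⋆ (γ' ∘ₗ ρ)) x ⊗ₜ[k] 1) ∧
    (W ⋆ (γ' ∘ₗ ρ)) ⋆ (γ ∘ₗ ρ) = W := by
  constructor
  · have h1 : ν.toLinearMap ∘ₗ (W ⋆ (γ' ∘ₗ ρ)) = (j1 k E H).toLinearMap ∘ₗ (W ⋆ (γ' ∘ₗ ρ)) := by
      have hid : LinearMap.id ⋆ HopfAlgebra.antipode k (A := H) = cu H H :=
        congrArg WithConv.ofConv LinearMap.id_mul_antipode
      have h2 := comp_cv (iH k E H) ρ (HopfAlgebra.antipode k ∘ₗ ρ)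
      have h3 := cv_comp LinearMap.id (HopfAlgebra.antipode k) ρ hρ
      rw [hid, cu_comp _ hρ', LinearMap.id_comp] at h3
      rw [← h3, comp_cu] at h2
      have hW' : ν.toLinearMap ∘ₗ W = _ := hW
      rw [comp_cv, ← LinearMap.comp_assoc, hγ', cv_comp _ _ _ hρ, hW', cv_assoc,
        ← cv_assoc ((iH k E H).toLinearMap ∘ₗ ρ), LinearMap.comp_assoc ρ, ← h2, one_cv, comp_cv]
      rfl
    intro x
    exact congrArg (fun X => X x) h1
  · rw [cv_assoc, ← cv_comp _ _ _ hρ, hinv, cu_comp _ hρ', cv_one]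

/-- co-opposite coalgebra -/
def Cop (H : Type uH) : Type uH := H

instance : AddCommGroup (Cop H) := inferInstanceAs (AddCommGroup H)
instance : Module k (Cop H) := inferInstanceAs (Module k H)

/-- identity -/
def toCop (k : Type*) (H : Type uH) [CommRing k] [Ring H] [HopfAlgebra k H] : H ≃ₗ[k] Cop H :=
  LinearEquiv.refl k H

/-- co-opposite comultiplication -/
noncomputable def copComul (k : Type*) (H : Type uH) [CommRing k] [Ring H] [HopfAlgebra k H] :
    Cop H →ₗ[k] Cop H ⊗[k] Cop H :=
  TensorProduct.map (toCop k H).toLinearMap (toCop k H).toLinearMap ∘ₗ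
    (TensorProduct.comm k H H).toLinearMap ∘ₗ comul ∘ₗ (toCop k H).symm.toLinearMap

theorem copComul_repr {ι : Type*} {x : H} {s : Finset ι} {a b : ι → H}
    (hx : comul (R := k) x = ∑ i ∈ s, a i ⊗ₜ[k] b i) :
    copComul k H (toCop k H x) = ∑ i ∈ s, toCop k H (b i) ⊗ₜ[k] toCop k H (a i) := by
  simp [copComul, hx]

noncomputable instance : Coalgebra k (Cop H) where
  comul := copComul k H
  counit := counit ∘ₗ (toCop k H).symm.toLinearMap
  coassoc := by
    let t := (toCop k H).toLinearMap
    let rev : H ⊗[k] (H ⊗[k] H) →ₗ[k] Cop H ⊗[k] (Cop H ⊗[k] Cop H) :=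
      (TensorProduct.assoc k (Cop H) (Cop H) (Cop H)).toLinearMap ∘ₗ
      TensorProduct.map (TensorProduct.map t t) t ∘ₗ
      TensorProduct.map (TensorProduct.comm k H H).toLinearMap LinearMap.id ∘ₗ
      (TensorProduct.comm k H (H ⊗[k] H)).toLinearMap
    have hrev : ∀ a b c : H, rev (a ⊗ₜ (b ⊗ₜ c)) = t c ⊗ₜ (t b ⊗ₜ t a) := by
      intro a b c; simp [rev]
    apply LinearMap.ext
    intro y
    obtain ⟨x, rfl⟩ := (toCop k H).surjective y
    have := congrArg rev (Coalgebra.coassoc_apply (R := k) x)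
    rw [← (ℛ k x).eq] at this
    simp only [map_sum, LinearMap.rTensor_tmul, LinearMap.lTensor_tmul,
      fun i => (ℛ k ((ℛ k x).left i)).eq.symm, fun i => (ℛ k ((ℛ k x).right i)).eq.symm,
      TensorProduct.sum_tmul, TensorProduct.tmul_sum, TensorProduct.assoc_tmul, hrev] at this
    simp only [LinearMap.comp_apply, copComul_repr (ℛ k x).eq.symm, map_sum,
      LinearMap.rTensor_tmul, LinearMap.lTensor_tmul, copComul_repr (ℛ k ((ℛ k x).left _)).eq.symm,
      copComul_repr (ℛ k ((ℛ k x).right _)).eq.symm, TensorProduct.sum_tmul,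
      TensorProduct.tmul_sum, LinearEquiv.coe_coe, TensorProduct.assoc_tmul]
    exact this.symm
  rTensor_counit_comp_comul := by
    apply LinearMap.ext
    intro y
    obtain ⟨x, rfl⟩ := (toCop k H).surjective y
    have := lTensor_counit_comul (R := k) x
    rw [← (ℛ k x).eq] at this
    have h2 := congrArg (fun z => TensorProduct.map LinearMap.id (toCop k H).toLinearMap
      (TensorProduct.comm k H k z)) this
    simp only [LinearMap.comp_apply, copComul_repr (ℛ k x).eq.symm]
    simp only [map_sum, LinearMap.lTensor_tmul, TensorProduct.comm_tmul, TensorProduct.map_tmul,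
      LinearMap.id_apply, LinearEquiv.coe_coe] at h2
    simp
    exact h2
  lTensor_counit_comp_comul := by
    apply LinearMap.ext
    intro y
    obtain ⟨x, rfl⟩ := (toCop k H).surjective y
    have := rTensor_counit_comul (R := k) x
    rw [← (ℛ k x).eq] at this
    have h2 := congrArg (fun z => TensorProduct.map (toCop k H).toLinearMap LinearMap.id
      (TensorProduct.comm k k H z)) this
    simp only [LinearMap.comp_apply, copComul_repr (ℛ k x).eq.symm]
    simp only [map_sum, LinearMap.rTensor_tmul, TensorProduct.comm_tmul, TensorProduct.map_tmul,
      LinearMap.id_apply, LinearEquiv.coe_coe] at h2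
    simp
    exact h2

theorem comul_cop_repr {ι : Type*} {x : H} {s : Finset ι} {a b : ι → H}
    (hx : comul (R := k) x = ∑ i ∈ s, a i ⊗ₜ[k] b i) :
    comul (R := k) (toCop k H x) = ∑ i ∈ s, toCop k H (b i) ⊗ₜ[k] toCop k H (a i) :=
  copComul_repr hx

theorem sumPi {M : Type*} [AddCommMonoid M] {m : ℕ} (s : Fin (m + 1) → Finset ℕ)
    (F : (Fin (m + 1) → ℕ) → M) :
    ∑ p ∈ Fintype.piFinset s, F p =
      ∑ a ∈ s 0, ∑ p ∈ Fintype.piFinset (fun j : Fin m => s j.succ), F (Fin.cons a p) := by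
  rw [← Finset.sum_product']
  symm
  refine Finset.sum_bij (fun x _ => Fin.cons x.1 x.2) ?_ ?_ ?_ ?_
  · rintro ⟨a, p⟩ h
    simp only [Finset.mem_product, Fintype.mem_piFinset] at h ⊢
    intro j
    refine Fin.cases ?_ ?_ j
    · simpa using h.1
    · simpa using h.2
  · rintro ⟨a, p⟩ _ ⟨b, q⟩ _ h
    simpa using Fin.cons_inj.1 h
  · intro p hp
    simp only [Fintype.mem_piFinset] at hp
    refine ⟨(p 0, Fin.tail p), ?_, by simp⟩
    simp only [Finset.mem_product, Fintype.mem_piFinset]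
    exact ⟨hp 0, fun j => hp j.succ⟩
  · simp

theorem exists_D {n : H → ℕ} {c₁ c₂ : H → ℕ → H} (hrep : IsSweedlerRep k H n c₁ c₂)
    {ν : E →ₐ[k] E ⊗[k] H} {γ' : H →ₗ[k] E}
    (hγ' : ν.toLinearMap ∘ₗ γ' = ((iH k E H).toLinearMap ∘ₗ HopfAlgebra.antipode k) ⋆
      ((j1 k E H).toLinearMap ∘ₗ γ')) (m : ℕ) :
    ∃ (D : Type uH) (_ : AddCommGroup D) (_ : Module k D) (_ : Coalgebra k D)
      (δ : (Fin (m + 1) → H) → D) (κ : D →ₗ[k] H) (G : D →ₗ[k] E),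
      (comul ∘ₗ κ = TensorProduct.map κ κ ∘ₗ comul) ∧
      (counit ∘ₗ κ = counit (R := k)) ∧ NuComp ν G κ ∧
      ∀ g, comul (R := k) (δ g) = ∑ p ∈ Fintype.piFinset (fun j => Finset.range (n (g j))),
          δ (fun j => c₂ (g j) (p j)) ⊗ₜ[k] δ (fun j => c₁ (g j) (p j)) ∧
        κ (δ g) = HopfAlgebra.antipode k (List.ofFn g).prod ∧
        G (δ g) = ((List.ofFn (fun j => γ' (g j))).reverse).prod := by
  have hS1 : comul ∘ₗ (HopfAlgebra.antipode k ∘ₗ (toCop k H).symm.toLinearMap) =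
      TensorProduct.map (HopfAlgebra.antipode k ∘ₗ (toCop k H).symm.toLinearMap)
        (HopfAlgebra.antipode k ∘ₗ (toCop k H).symm.toLinearMap) ∘ₗ comul := by
    apply LinearMap.ext
    intro y
    obtain ⟨x, rfl⟩ := (toCop k H).surjective y
    simp [comul_cop_repr (hrep x), comul_antipode_sum hrep]
  have hS2 : counit ∘ₗ (HopfAlgebra.antipode k ∘ₗ (toCop k H).symm.toLinearMap) =
      counit (R := k) := by
    apply LinearMap.ext
    intro y
    obtain ⟨x, rfl⟩ := (toCop k H).surjective y
    simp
    rfl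
  have hS3 : NuComp ν (γ' ∘ₗ (toCop k H).symm.toLinearMap)
      (HopfAlgebra.antipode k ∘ₗ (toCop k H).symm.toLinearMap) := by
    apply LinearMap.ext
    intro y
    obtain ⟨x, rfl⟩ := (toCop k H).surjective y
    have := congrArg (fun X => X x) hγ'
    simp only [cv_repr _ _ (hrep x)] at this
    rw [cv_repr _ _ (comul_cop_repr (hrep x))]
    simpa using this
  induction m with
  | zero =>
    refine ⟨Cop H, inferInstance, inferInstance, inferInstance, fun g => toCop k H (g 0), _, _,
      hS1, hS2, hS3, ?_⟩
    intro g
    refine ⟨?_, by simp, by simp⟩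
    rw [comul_cop_repr (hrep (g 0)), sumPi]
    simp
  | succ m ih =>
    obtain ⟨D, _, _, _, δ, κ, G, h1, h2, h3, h4⟩ := ih
    refine ⟨D ⊗[k] Cop H, inferInstance, inferInstance, inferInstance,
      fun g => δ (fun j => g j.succ) ⊗ₜ toCop k H (g 0), _, _, ?_, ?_, h3.mul hS3, ?_⟩
    · rw [← LinearMap.comp_assoc, comul_mul', LinearMap.comp_assoc, comul_map _ _ h1 hS1,
        ← LinearMap.comp_assoc, ← TensorProduct.map_comp]
    · rw [← LinearMap.comp_assoc, counit_mul', counit_map _ _ h2 hS2]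
    · intro g
      obtain ⟨a1, a2, a3⟩ := h4 (fun j => g j.succ)
      refine ⟨?_, ?_, ?_⟩
      · rw [comul_tmul_repr a1 (comul_cop_repr (hrep (g 0)))]
        conv_rhs => rw [sumPi]
        rw [Finset.sum_comm]
        simp
      · simp [a2, List.ofFn_succ, HopfAlgebra.antipode_mul_antidistrib]
      · simp [a3, List.ofFn_succ, mul_assoc]

end Aux3

section Aux4
open Coalgebra

local infixl:70 " ⋆ " => cv

universe uA uH

variable {k : Type*} {A : Type uA} {H : Type uH} [CommRing k] [Ring A] [Algebra k A] [Ring H]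
  [HopfAlgebra k H]
  {σ : H →ₗ[k] A →ₗ[k] A} {f finv : H →ₗ[k] H →ₗ[k] A} {n : H → ℕ} {c₁ c₂ : H → ℕ → H}

/-- The bundled hypotheses making the crossed product an associative unital algebra. -/
structure CPHyp (σ : H →ₗ[k] A →ₗ[k] A) (f : H →ₗ[k] H →ₗ[k] A)
    (n : H → ℕ) (c₁ c₂ : H → ℕ → H) : Prop where
  hrep : IsSweedlerRep k H n c₁ c₂
  hweak : IsWeakAction k A H n c₁ c₂ σ
  hnormal : IsNormal k A H f
  hcocycle : IsCocycle k A H n c₁ c₂ σ f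
  htwisted : IsTwistedModule k A H n c₁ c₂ σ f

/-- The crossed product algebra. -/
def CP (_ : CPHyp σ f n c₁ c₂) : Type (max uA uH) := A ⊗[k] H

variable (hc : CPHyp σ f n c₁ c₂)

noncomputable instance : AddCommGroup (CP hc) := inferInstanceAs (AddCommGroup (A ⊗[k] H))
noncomputable instance : Module k (CP hc) := inferInstanceAs (Module k (A ⊗[k] H))

/-- identity map to the crossed product -/
noncomputable def toCP : A ⊗[k] H ≃ₗ[k] CP hc := LinearEquiv.refl k (A ⊗[k] H)

noncomputable instance : Ring (CP hc) :=
  { (inferInstance : AddCommGroup (CP hc)) with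
    mul := fun x y => toCP hc (crossedMul k A H σ f ((toCP hc).symm x) ((toCP hc).symm y))
    one := toCP hc (oneE k A H)
    mul_assoc := fun x y z => crossedMul_assoc hc.hrep hc.hweak hc.hcocycle hc.htwisted x y z
    one_mul := fun x => crossedMul_one_left hc.hrep hc.hweak hc.hnormal x
    mul_one := fun x => crossedMul_one_right hc.hrep hc.hweak hc.hnormal x
    left_distrib := fun x y z => (crossedMul k A H σ f x).map_add y z
    right_distrib := fun x y z => LinearMap.map_add₂ (crossedMul k A H σ f) x y z
    zero_mul := fun x => LinearMap.map_zero₂ (crossedMul k A H σ f) x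
    mul_zero := fun x => (crossedMul k A H σ f x).map_zero }

theorem toCP_mul (x y : A ⊗[k] H) :
    toCP hc x * toCP hc y = toCP hc (crossedMul k A H σ f x y) := rfl

theorem toCP_one : (1 : CP hc) = toCP hc (oneE k A H) := rfl

noncomputable instance : Algebra k (CP hc) :=
  Algebra.ofModule (fun r x y => LinearMap.map_smul₂ (crossedMul k A H σ f) r x y)
    (fun r x y => (crossedMul k A H σ f x).map_smul r y)

theorem toCP_prodE (L : List (A ⊗[k] H)) :
    toCP hc (prodE k A H σ f L) = (L.map (toCP hc)).prod := by
  induction L with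
  | nil => rfl
  | cons x L ih => rw [prodE, ← toCP_mul, ih, List.map_cons, List.prod_cons]

/-- The underlying linear map of the coaction. -/
noncomputable def nuL : CP hc →ₗ[k] CP hc ⊗[k] H :=
  LinearMap.rTensor H (toCP hc).toLinearMap ∘ₗ nuE k A H ∘ₗ (toCP hc).symm.toLinearMap

theorem nuL_toCP (x : A ⊗[k] H) :
    nuL hc (toCP hc x) = LinearMap.rTensor H (toCP hc).toLinearMap (nuE k A H x) := by
  simp [nuL]

theorem nuE_tmul (hrep : IsSweedlerRep k H n c₁ c₂) (a : A) (h : H) :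
    nuE k A H (a ⊗ₜ h) = ∑ i ∈ Finset.range (n h), (a ⊗ₜ[k] c₁ h i) ⊗ₜ[k] c₂ h i := by
  simp [nuE, hrep h, TensorProduct.tmul_sum]

theorem nuL_mul (x y : CP hc) : nuL hc (x * y) = nuL hc x * nuL hc y := by
  obtain ⟨x, rfl⟩ := (toCP hc).surjective x
  obtain ⟨y, rfl⟩ := (toCP hc).surjective y
  induction x with
  | zero => simp
  | add x x' hx hx' => simp only [map_add, add_mul, hx, hx']
  | tmul a h =>
    induction y with
    | zero => simp
    | add x x' hx hx' => simp only [map_add, mul_add, hx, hx']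
    | tmul b l =>
      rw [toCP_mul, nuL_toCP, nuL_toCP, nuL_toCP, nu_mul hc.hrep, nuE_tmul hc.hrep,
        nuE_tmul hc.hrep]
      simp only [map_sum, LinearMap.rTensor_tmul, Finset.sum_mul_sum,
        Algebra.TensorProduct.tmul_mul_tmul, LinearEquiv.coe_coe, toCP_mul]

theorem nuL_one : nuL hc 1 = 1 := by
  rw [toCP_one, nuL_toCP, Algebra.TensorProduct.one_def, toCP_one]
  simp [nuE, oneE, Algebra.TensorProduct.one_def]

/-- The coaction as an algebra map. -/
noncomputable def nuA : CP hc →ₐ[k] CP hc ⊗[k] H :=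
  AlgHom.ofLinearMap (nuL hc) (nuL_one hc) (nuL_mul hc)

theorem nuA_toCP (x : A ⊗[k] H) :
    nuA hc (toCP hc x) = LinearMap.rTensor H (toCP hc).toLinearMap (nuE k A H x) :=
  nuL_toCP hc x

theorem nuComp_gam : NuComp (nuA hc) ((toCP hc).toLinearMap ∘ₗ gam k A H) LinearMap.id := by
  unfold NuComp
  ext h
  rw [cv_repr _ _ (hc.hrep h)]
  simp [nuA_toCP, gam, nuE_tmul hc.hrep]

theorem nuA_gammaInv : (nuA hc).toLinearMap ∘ₗ ((toCP hc).toLinearMap ∘ₗ gammaInv k A H finv) =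
    ((iH k (CP hc) H).toLinearMap ∘ₗ HopfAlgebra.antipode k) ⋆
      ((j1 k (CP hc) H).toLinearMap ∘ₗ ((toCP hc).toLinearMap ∘ₗ gammaInv k A H finv)) := by
  ext h
  have := congrArg (fun X => X h) (nu_gammaInv (finv := finv) hc.hrep)
  simp only [cv_repr _ _ (hc.hrep h), LinearMap.comp_apply] at this
  rw [cv_repr _ _ (hc.hrep h)]
  simp [nuA_toCP, this]

theorem gammaInv_cv_gam (hinv : IsConvInverse k A H n c₁ c₂ f finv) :
    ((toCP hc).toLinearMap ∘ₗ gammaInv k A H finv) ⋆ ((toCP hc).toLinearMap ∘ₗ gam k A H) =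
      cu H (CP hc) := by
  ext h
  rw [cv_repr _ _ (hc.hrep h)]
  have := congrArg (toCP hc) (gammaInv_gam hc.hrep hc.hweak hinv h)
  simp only [LinearMap.comp_apply, LinearEquiv.coe_coe, toCP_mul]
  rw [← map_sum, this, map_smul, ← toCP_one]
  simp [cu, Algebra.algebraMap_eq_smul_one]

theorem key (hinv : IsConvInverse k A H n c₁ c₂ f finv) (m : ℕ) :
    ∃ (D : Type uH) (_ : AddCommGroup D) (_ : Module k D) (_ : Coalgebra k D)
      (δ : (Fin (m + 1) → H) → D) (W : H ⊗[k] D →ₗ[k] CP hc) (ρ : H ⊗[k] D →ₗ[k] H)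
      (U : H ⊗[k] D →ₗ[k] CP hc),
      (∀ g, comul (R := k) (δ g) = ∑ p ∈ Fintype.piFinset (fun j => Finset.range (n (g j))),
          δ (fun j => c₂ (g j) (p j)) ⊗ₜ[k] δ (fun j => c₁ (g j) (p j))) ∧
      (∀ h g, W (h ⊗ₜ δ g) = toCP hc (crossedMul k A H σ f (gam k A H h) (prodE k A H σ f
          ((List.ofFn (fun j => gammaInv k A H finv (g j))).reverse)))) ∧
      (∀ h g, ρ (h ⊗ₜ δ g) = h * HopfAlgebra.antipode k (List.ofFn g).prod) ∧
      U = W ⋆ (((toCP hc).toLinearMap ∘ₗ gammaInv k A H finv) ∘ₗ ρ) ∧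
      (∀ x, nuA hc (U x) = U x ⊗ₜ[k] 1) ∧
      U ⋆ (((toCP hc).toLinearMap ∘ₗ gam k A H) ∘ₗ ρ) = W := by
  obtain ⟨D, _, _, _, δ, κ, G, h1, h2, h3, h4⟩ :=
    exists_D hc.hrep (nuA_gammaInv (finv := finv) hc) m
  have hid : comul ∘ₗ LinearMap.id (M := H) = TensorProduct.map LinearMap.id LinearMap.id ∘ₗ
    comul (R := k) := by simp
  have hid2 : counit ∘ₗ LinearMap.id (M := H) = counit (R := k) := by simp
  have hm := main_abs ((nuComp_gam hc).mul h3)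
    (by rw [← LinearMap.comp_assoc, comul_mul', LinearMap.comp_assoc, comul_map _ _ hid h1,
        ← LinearMap.comp_assoc, ← TensorProduct.map_comp])
    (by rw [← LinearMap.comp_assoc, counit_mul', counit_map _ _ hid2 h2])
    (nuA_gammaInv (finv := finv) hc) (gammaInv_cv_gam hc hinv)
  refine ⟨D, inferInstance, inferInstance, inferInstance, δ, _, _, _,
    fun g => (h4 g).1, ?_, ?_, rfl, hm.1, hm.2⟩
  · intro h g
    rw [← toCP_mul, toCP_prodE]
    simp only [LinearMap.comp_apply, TensorProduct.map_tmul, LinearMap.mul'_apply, (h4 g).2.2,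
      List.map_reverse, List.map_ofFn]
    rfl
  · intro h g
    simp [(h4 g).2.1]

theorem key_U (m : ℕ) {D : Type uH} [AddCommGroup D] [Module k D] [Coalgebra k D]
    {δ : (Fin (m + 1) → H) → D} {W : H ⊗[k] D →ₗ[k] CP hc} {ρ : H ⊗[k] D →ₗ[k] H}
    (h1 : ∀ g, comul (R := k) (δ g) = ∑ p ∈ Fintype.piFinset (fun j => Finset.range (n (g j))),
          δ (fun j => c₂ (g j) (p j)) ⊗ₜ[k] δ (fun j => c₁ (g j) (p j)))
    (h2 : ∀ h g, W (h ⊗ₜ δ g) = toCP hc (crossedMul k A H σ f (gam k A H h) (prodE k A H σ f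
          ((List.ofFn (fun j => gammaInv k A H finv (g j))).reverse))))
    (h3 : ∀ h g, ρ (h ⊗ₜ δ g) = h * HopfAlgebra.antipode k (List.ofFn g).prod)
    (hh : Fin (m + 1 + 1) → H) :
    (W ⋆ (((toCP hc).toLinearMap ∘ₗ gammaInv k A H finv) ∘ₗ ρ))
      (hh 0 ⊗ₜ δ (fun j => hh j.succ)) = toCP hc (Udef k A H σ f finv n c₁ c₂ hh) := by
  rw [cv_tmul _ _ (hc.hrep (hh 0)) (h1 _), Udef, sumPi, map_sum]
  refine Finset.sum_congr rfl fun a _ => ?_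
  rw [map_sum]
  refine Finset.sum_congr rfl fun p _ => ?_
  simp only [LinearMap.comp_apply, h2, h3, LinearEquiv.coe_coe, ← toCP_mul, Fin.cons_zero,
    Fin.cons_succ, mul_assoc]

theorem coinv_mem (x : A ⊗[k] H) (hx : nuE k A H x = x ⊗ₜ[k] 1) : ∃ a : A, x = a ⊗ₜ[k] (1 : H) := by
  let e : A ⊗[k] H →ₗ[k] A := (TensorProduct.rid k A).toLinearMap ∘ₗ LinearMap.lTensor A counit
  refine ⟨e x, ?_⟩
  have h1 : ∀ y, LinearMap.rTensor H e (nuE k A H y) = y := by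
    intro y
    induction y with
    | zero => simp
    | add x x' hx hx' => simp only [map_add, hx, hx']
    | tmul a h =>
      have := rTensor_counit_comul (R := k) h
      rw [← (ℛ k h).eq] at this
      have t := congrArg (fun z => a ⊗ₜ[k] TensorProduct.lid k H z) this
      simp only [map_sum, LinearMap.rTensor_tmul, TensorProduct.lid_tmul, one_smul] at t
      conv_rhs => rw [← t]
      simp only [nuE, LinearMap.comp_apply, LinearMap.lTensor_tmul]
      rw [← (ℛ k h).eq]
      simp [TensorProduct.tmul_sum, e, TensorProduct.smul_tmul]
  have := h1 x
  rw [hx, LinearMap.rTensor_tmul] at this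
  exact this.symm

theorem final (hc : CPHyp σ f n c₁ c₂) (hinv : IsConvInverse k A H n c₁ c₂ f finv)
    (m : ℕ) (hh : Fin (m + 1 + 1) → H) :
    nuE k A H (Udef k A H σ f finv n c₁ c₂ hh) =
        Udef k A H σ f finv n c₁ c₂ hh ⊗ₜ[k] (1 : H) ∧
    (crossedMul k A H σ f (gam k A H (hh 0))
        (prodE k A H σ f
          ((List.ofFn (fun j : Fin (m + 1) => gammaInv k A H finv (hh j.succ))).reverse)) =
      ∑ q ∈ Fintype.piFinset (fun j : Fin (m + 1 + 1) => Finset.range (n (hh j))),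
        crossedMul k A H σ f
          (Udef k A H σ f finv n c₁ c₂
            (Fin.cons (c₁ (hh 0) (q 0)) (fun j : Fin (m + 1) => c₂ (hh j.succ) (q j.succ))))
          (gam k A H
            (c₂ (hh 0) (q 0) *
              HopfAlgebra.antipode (R := k)
                ((List.ofFn (fun j : Fin (m + 1) => c₁ (hh j.succ) (q j.succ))).prod)))) := by
  obtain ⟨D, _, _, _, δ, W, ρ, U, h1, h2, h3, hU, h5, h6⟩ := key hc hinv m
  have hk : ∀ hh : Fin (m + 1 + 1) → H, U (hh 0 ⊗ₜ δ (fun j => hh j.succ)) =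
      toCP hc (Udef k A H σ f finv n c₁ c₂ hh) := by
    intro hh
    rw [hU]
    exact key_U hc m h1 h2 h3 hh
  have hk2 : ∀ h (g : Fin (m + 1) → H), U (h ⊗ₜ δ g) =
      toCP hc (Udef k A H σ f finv n c₁ c₂ (Fin.cons h g)) := by
    intro h g
    exact hk (Fin.cons h g)
  constructor
  · have := h5 (hh 0 ⊗ₜ δ (fun j => hh j.succ))
    rw [hk, nuA_toCP] at this
    have h := congrArg (LinearMap.rTensor H (toCP hc).symm.toLinearMap) this
    rw [← LinearMap.comp_apply, ← LinearMap.rTensor_comp] at h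
    simpa using h
  · apply (toCP hc).injective
    rw [← h2 (hh 0) (fun j => hh j.succ), ← h6, cv_tmul _ _ (hc.hrep (hh 0)) (h1 _), sumPi, map_sum]
    refine Finset.sum_congr rfl fun a _ => ?_
    rw [map_sum]
    refine Finset.sum_congr rfl fun p _ => ?_
    simp only [LinearMap.comp_apply, hk2, h3, LinearEquiv.coe_coe, ← toCP_mul, Fin.cons_zero,
      Fin.cons_succ]

end Aux4

section Statement8

variable (k A H : Type*) [CommRing k] [Ring A] [Algebra k A] [Ring H] [HopfAlgebra k H]

/-- (a) `U(h₀,…,h_i)` is `ν`-coinvariant, hence lies in `A # 1`; and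
(b) `γ(h₀) γ⁻¹(h_i) ⋯ γ⁻¹(h₁) = U(h₀⁽¹⁾, h₁⁽²⁾, …, h_i⁽²⁾) γ(h₀⁽²⁾ S(h₁⁽¹⁾ ⋯ h_i⁽¹⁾))`. -/
theorem U_coinvariant_and_factorization
    (σ : H →ₗ[k] A →ₗ[k] A) (f finv : H →ₗ[k] H →ₗ[k] A)
    (n : H → ℕ) (c₁ c₂ : H → ℕ → H)
    (hrep : IsSweedlerRep k H n c₁ c₂)
    (hweak : IsWeakAction k A H n c₁ c₂ σ)
    (hnormal : IsNormal k A H f)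
    (hcocycle : IsCocycle k A H n c₁ c₂ σ f)
    (htwisted : IsTwistedModule k A H n c₁ c₂ σ f)
    (hinv : IsConvInverse k A H n c₁ c₂ f finv)
    (i : ℕ) (hi : 1 ≤ i) (hh : Fin (i + 1) → H) :
    (nuE k A H (Udef k A H σ f finv n c₁ c₂ hh) =
        Udef k A H σ f finv n c₁ c₂ hh ⊗ₜ[k] (1 : H) ∧
      ∃ a : A, Udef k A H σ f finv n c₁ c₂ hh = a ⊗ₜ[k] (1 : H)) ∧
    (crossedMul k A H σ f (gam k A H (hh 0))
        (prodE k A H σ f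
          ((List.ofFn (fun j : Fin i => gammaInv k A H finv (hh j.succ))).reverse)) =
      ∑ q ∈ Fintype.piFinset (fun j : Fin (i + 1) => Finset.range (n (hh j))),
        crossedMul k A H σ f
          (Udef k A H σ f finv n c₁ c₂
            (Fin.cons (c₁ (hh 0) (q 0)) (fun j : Fin i => c₂ (hh j.succ) (q j.succ))))
          (gam k A H
            (c₂ (hh 0) (q 0) *
              HopfAlgebra.antipode (R := k)
                ((List.ofFn (fun j : Fin i => c₁ (hh j.succ) (q j.succ))).prod)))) := by
  obtain ⟨m, rfl⟩ : ∃ m, i = m + 1 := ⟨i - 1, by omega⟩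
  obtain ⟨ha, hb⟩ := final ⟨hrep, hweak, hnormal, hcocycle, htwisted⟩ hinv m hh
  exact ⟨⟨ha, coinv_mem _ ha⟩, hb⟩

end Statement8
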